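/- Let q be a real number that is transcendental over ℚ, and let α be a real number with 2α³ + 3α² − 4q²·α − 1 = 0. Then there is no finite tower of subfields ℚ(q) = K₀ ⊆ K₁ ⊆ ⋯ ⊆ Kₙ of ℝ such that [Kᵢ : Kᵢ₋₁] = 2 for every i = 1, …, n and α ∈ Kₙ. -/

import Mathlib

set_option autoImplicit false
set_option synthInstance.maxHeartbeats 400000

/-!
Over `F(q) ≅ F(X)`, a polynomial `f(Y) + g(q) Y` with `f ∈ F[Y]`, `f(0) ≠ 0`, `deg f ≥ 2` has unit
leading and constant coefficients in `F[X][Y]`. By the rational root theorem its roots in `F(X)` are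
units of `F[X]`, that is, nonzero constants `c`; but `g c = -f(c)` is impossible when `g` is not
constant. So for `deg f = 3` the polynomial is irreducible, its roots have degree `3` over `F(q)`,
and `3` divides one of the degrees in any tower reaching such a root. The cubic at hand is
`f = 2 Y³ + 3 Y² - 1` with `g = -4 X²`.
-/

open Polynomial IntermediateField

theorem exists_unit_algebraMap_eq_of_aeval_eq_zero {A K : Type*} [CommRing A] [IsDomain A]
    [UniqueFactorizationMonoid A] [Field K] [Algebra A K] [IsFractionRing A K] {p : A[X]}
    (h_lead : IsUnit p.leadingCoeff) (h_zero : IsUnit (p.coeff 0)) {x : K} (hx : aeval x p = 0) :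
    ∃ u : Aˣ, algebraMap A K u = x := by
  obtain ⟨num, h_num⟩ := isUnit_of_dvd_unit (num_dvd_of_is_root hx) h_zero
  obtain ⟨den, h_den⟩ := isUnit_of_dvd_unit (den_dvd_of_is_root hx) h_lead
  refine ⟨num * den⁻¹, ?_⟩
  rw [← IsFractionRing.mk'_num_den' A x, ← h_num, ← h_den,
    eq_div_iff (den.isUnit.map (algebraMap A K)).ne_zero, ← map_mul, Units.val_mul,
    Units.inv_mul_cancel_right]

section AddLinear

variable {F R S : Type*} [CommSemiring F] [CommSemiring R] [Algebra F R]

/-- The polynomial `f(Y) + c Y` over an `F`-algebra `R`, for `f` with coefficients in `F`: a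
family of polynomials in which only the linear coefficient varies. -/
noncomputable def addLinear (f : F[X]) (c : R) : R[X] :=
  f.map (algebraMap F R) + C c * X

theorem coeff_zero_addLinear (f : F[X]) (c : R) :
    (addLinear f c).coeff 0 = algebraMap F R (f.coeff 0) := by
  simp [addLinear]

theorem aeval_addLinear [CommSemiring S] [Algebra F S] [Algebra R S] [IsScalarTower F R S]
    (f : F[X]) (c : R) (x : S) :
    aeval x (addLinear f c) = aeval x f + algebraMap R S c * x := by
  simp [addLinear]

variable [FaithfulSMul F R] {f : F[X]}

theorem degree_C_mul_X_lt_degree_map (hf : 2 ≤ f.natDegree) (c : R) :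
    (C c * X).degree < (f.map (algebraMap F R)).degree := by
  apply degree_lt_degree
  rw [natDegree_map_eq_of_injective (FaithfulSMul.algebraMap_injective F R)]
  exact (natDegree_le_of_degree_le (degree_C_mul_X_le c)).trans_lt hf

theorem natDegree_addLinear (hf : 2 ≤ f.natDegree) (c : R) :
    (addLinear f c).natDegree = f.natDegree := by
  rw [addLinear, natDegree_add_eq_left_of_degree_lt (degree_C_mul_X_lt_degree_map hf c),
    natDegree_map_eq_of_injective (FaithfulSMul.algebraMap_injective F R)]

theorem leadingCoeff_addLinear (hf : 2 ≤ f.natDegree) (c : R) :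
    (addLinear f c).leadingCoeff = algebraMap F R f.leadingCoeff := by
  rw [addLinear, leadingCoeff_add_of_degree_lt' (degree_C_mul_X_lt_degree_map hf c),
    leadingCoeff_map_of_injective (FaithfulSMul.algebraMap_injective F R)]

end AddLinear

section TranscendentalParameter

variable {F E : Type*} [Field F] [Field E] [Algebra F E] {f g : F[X]}

theorem aeval_addLinear_ratFunc_ne_zero (hf : 2 ≤ f.natDegree) (hf0 : f.coeff 0 ≠ 0)
    (hg : 0 < g.natDegree) (x : RatFunc F) : aeval x (addLinear f g) ≠ 0 := by
  intro hx
  have hf_lead : f.leadingCoeff ≠ 0 := leadingCoeff_ne_zero.2 (ne_zero_of_natDegree_gt hf)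
  obtain ⟨u, rfl⟩ := exists_unit_algebraMap_eq_of_aeval_eq_zero
    (by rw [leadingCoeff_addLinear hf]; exact hf_lead.isUnit.map _)
    (by rw [coeff_zero_addLinear]; exact hf0.isUnit.map _) hx
  obtain ⟨c, hc, hcu⟩ := Polynomial.isUnit_iff.1 u.isUnit
  have h_eq : C (f.eval c) + g * C c = 0 := by
    apply RatFunc.algebraMap_injective F
    rw [aeval_algebraMap_apply, ← hcu, aeval_addLinear] at hx
    rw [map_zero, ← hx, ← algebraMap_eq, aeval_algebraMap_apply_eq_algebraMap_eval,
      Algebra.algebraMap_self_apply]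
  have h_natDegree := congrArg natDegree h_eq
  rw [natDegree_C_add, natDegree_mul_C hc.ne_zero, natDegree_zero] at h_natDegree
  exact hg.ne' h_natDegree

theorem aeval_addLinear_adjoin_simple_ne_zero {q : E} (hq : Transcendental F q)
    (hf : 2 ≤ f.natDegree) (hf0 : f.coeff 0 ≠ 0) (hg : 0 < g.natDegree) (x : F⟮q⟯) :
    aeval x (addLinear f (aeval (AdjoinSimple.gen F q) g)) ≠ 0 := by
  intro hx
  let e := RatFunc.algEquivOfTranscendental q hq
  apply aeval_addLinear_ratFunc_ne_zero hf hf0 hg (e.symm x)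
  have h_symm := congrArg e.symm hx
  simpa [aeval_addLinear, e, RatFunc.algEquivOfTranscendental_symm_aeval, aeval_algHom_apply]
    using h_symm

theorem natDegree_minpoly_adjoin_simple_eq_natDegree {q α : E} (hq : Transcendental F q)
    (hf2 : 2 ≤ f.natDegree) (hf3 : f.natDegree ≤ 3) (hf0 : f.coeff 0 ≠ 0) (hg : 0 < g.natDegree)
    (hα : aeval α f + aeval q g * α = 0) : (minpoly F⟮q⟯ α).natDegree = f.natDegree := by
  let p : F⟮q⟯[X] := addLinear f (aeval (AdjoinSimple.gen F q) g)
  have hp_deg : p.natDegree = f.natDegree := natDegree_addLinear hf2 _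
  have hp_irr : Irreducible p :=
    irreducible_of_degree_le_three_of_not_isRoot (Finset.mem_Icc.2 ⟨by omega, by omega⟩)
      (aeval_addLinear_adjoin_simple_ne_zero hq hf2 hf0 hg)
  have hp_root : aeval α p = 0 := by
    rw [aeval_addLinear, ← hα, ← aeval_algebraMap_apply, AdjoinSimple.algebraMap_gen]
  rw [← minpoly.eq_of_irreducible hp_irr hp_root,
    natDegree_mul_C (inv_ne_zero (leadingCoeff_ne_zero.2 hp_irr.ne_zero)), hp_deg]

end TranscendentalParameter

section Towers

variable {L : Type*} [Field L]

theorem relfinrank_eq_finrank_inclusion {A B : Subfield L} (h : A ≤ B) :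
    letI : Algebra A B := (Subfield.inclusion h).toAlgebra
    A.relfinrank B = Module.finrank A B :=
  Subfield.relfinrank_eq_finrank_of_le h

theorem relfinrank_zero_last_eq_prod {n : ℕ} {K : Fin (n + 1) → Subfield L} (hK : Monotone K) :
    (K 0).relfinrank (K (Fin.last n)) = ∏ i : Fin n, (K i.castSucc).relfinrank (K i.succ) := by
  induction n with
  | zero => simp
  | succ n ih =>
    rw [Fin.prod_univ_castSucc,
      ← Subfield.relfinrank_mul_relfinrank (hK (Fin.zero_le (Fin.last n).castSucc))
        (hK (Fin.le_last _))]
    exact congrArg (· * _) (ih (hK.comp Fin.strictMono_castSucc.monotone))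

theorem natDegree_minpoly_dvd_relfinrank {A B : Subfield L} (h : A ≤ B) {x : L} (hx : x ∈ B) :
    (minpoly A x).natDegree ∣ A.relfinrank B := by
  rw [Subfield.relfinrank_eq_finrank_of_le h]
  by_cases h_fin : FiniteDimensional A (Subfield.extendScalars h)
  · rw [← minpoly_eq (⟨x, hx⟩ : Subfield.extendScalars h)]
    exact minpoly.degree_dvd (IsIntegral.of_finite A _)
  · simp [Module.finrank_of_not_finite h_fin]

end Towers

theorem stmt_10_general {F E : Type*} [Field F] [Field E] [Algebra F E] {q α : E}
    (hq : Transcendental F q) {f g : F[X]} (hf : f.natDegree = 3) (hf0 : f.coeff 0 ≠ 0)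
    (hg : 0 < g.natDegree) (hα : aeval α f + aeval q g * α = 0) :
    ¬ ∃ (n : ℕ) (K : Fin (n + 1) → Subfield E)
        (hle : ∀ i : Fin n, K i.castSucc ≤ K i.succ),
      K 0 = F⟮q⟯.toSubfield ∧
      (∀ i : Fin n,
        letI : Algebra (K i.castSucc) (K i.succ) :=
          (Subfield.inclusion (hle i)).toAlgebra
        ¬ 3 ∣ Module.finrank (K i.castSucc) (K i.succ)) ∧
      α ∈ K (Fin.last n) := by
  rintro ⟨n, K, hle, h_base, h_step, h_mem⟩
  have hK : Monotone K := Fin.monotone_iff_le_succ.2 hle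
  have h_deg : (minpoly (K 0) α).natDegree = 3 := by
    rw [h_base, ← hf]
    exact natDegree_minpoly_adjoin_simple_eq_natDegree hq (by omega) hf.le hf0 hg hα
  have h_dvd : 3 ∣ ∏ i : Fin n, (K i.castSucc).relfinrank (K i.succ) := by
    rw [← relfinrank_zero_last_eq_prod hK, ← h_deg]
    exact natDegree_minpoly_dvd_relfinrank (hK (Fin.zero_le _)) h_mem
  obtain ⟨i, -, hi⟩ := (Nat.prime_three.prime.dvd_finsetProd_iff _).1 h_dvd
  exact h_step i (relfinrank_eq_finrank_inclusion (hle i) ▸ hi)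

open IntermediateField in
theorem stmt_10 (q α : ℝ) (hq : Transcendental ℚ q)
    (hα : 2 * α ^ 3 + 3 * α ^ 2 - 4 * q ^ 2 * α - 1 = 0) :
    ¬ ∃ (n : ℕ) (K : Fin (n + 1) → Subfield ℝ)
        (hle : ∀ i : Fin n, K i.castSucc ≤ K i.succ),
      K 0 = (ℚ⟮q⟯ : IntermediateField ℚ ℝ).toSubfield ∧
      (∀ i : Fin n,
        letI : Algebra (K i.castSucc) (K i.succ) :=
          (Subfield.inclusion (hle i)).toAlgebra
        Module.finrank (K i.castSucc) (K i.succ) = 2) ∧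
      α ∈ K (Fin.last n) := by
  rintro ⟨n, K, hle, h_base, h_step, h_mem⟩
  have hf : (2 * X ^ 3 + 3 * X ^ 2 - 1 : ℚ[X]).natDegree = 3 := by compute_degree!
  have hg : (-4 * X ^ 2 : ℚ[X]).natDegree = 2 := by compute_degree!
  refine stmt_10_general hq hf (by simp) (hg ▸ two_pos) ?_
    ⟨n, K, hle, h_base, fun i ↦ by simp [h_step i], h_mem⟩
  simp only [map_sub, map_add, map_mul, map_pow, map_neg, map_ofNat, map_one, aeval_X]
  linear_combination hα
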